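/- Every additive preorder on ℤ^r that is a total order (i.e., antisymmetric) is determined by lexicographic comparison of values under s linear forms v_1,…,v_s whose real span is not contained in any rational hyperplane; conversely, if vectors v_1,…,v_s ∈ ℝ^r span a subspace not contained in any rational hyperplane, then the relation m ≼ n iff (⟨m,v_1⟩,…,⟨m,v_s⟩) ≤_lex (⟨n,v_1⟩,…,⟨n,v_s⟩) is an additive total order on ℤ^r. -/

import Mathlib

/-- Lexicographic comparison of two tuples of reals. -/
def lexLE {s : ℕ} (f g : Fin s → ℝ) : Prop :=
  f = g ∨ ∃ i : Fin s, (∀ j : Fin s, j < i → f j = g j) ∧ f i < g i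

theorem lexLE_iff_toLex {s : ℕ} (f g : Fin s → ℝ) : lexLE f g ↔ toLex f ≤ toLex g := by
  rw [le_iff_eq_or_lt]
  rfl

theorem aux_main {M : Type} [AddCommGroup M] [LinearOrder M] [IsOrderedAddMonoid M] (r : ℕ)
    (e : M ≃+ (Fin r → ℤ)) :
    ∃ s : ℕ, s ≤ r ∧ ∃ φ : Fin s → M →+ ℝ,
      ∀ x y : M, x ≤ y ↔ lexLE (fun i => φ i x) (fun i => φ i y) := by
  obtain ⟨f, hinj, hord⟩ := hahnEmbedding_isOrderedAddMonoid M
  have key : ∀ c : FiniteArchimedeanClass M, ∃ x : M, (ofLex (f x)).orderTop = (c : WithTop _) := by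
    intro c
    induction c using FiniteArchimedeanClass.ind with
    | mk a ha =>
      refine ⟨a, ?_⟩
      apply (FiniteArchimedeanClass.withTopOrderIso M).injective
      rw [← hord, FiniteArchimedeanClass.withTopOrderIso_apply_coe]
      rfl
  choose x hx using key
  let ψ : FiniteArchimedeanClass M → M →+ ℝ := fun c =>
    { toFun := fun m => (ofLex (f m)).coeff c
      map_zero' := by simp
      map_add' := by intro a b; simp }
  have h0 : ∀ c d, c < d → ψ c (x d) = 0 := by
    intro c d hcd
    apply HahnSeries.coeff_eq_zero_of_lt_orderTop
    rw [hx]; exact_mod_cast hcd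
  have h1 : ∀ c, ψ c (x c) ≠ 0 := fun c => HahnSeries.coeff_orderTop_ne (hx c)
  have hli : LinearIndependent ℤ x := by
    rw [linearIndependent_iff']
    intro t g hg
    by_contra! hcon
    let u := t.filter (fun i => g i ≠ 0)
    have hu : u.Nonempty := by
      obtain ⟨i, hi, hgi⟩ := hcon
      exact ⟨i, by simp [u, hi, hgi]⟩
    have hmem := u.min'_mem hu
    set c := u.min' hu with hc
    have hm : c ∈ t ∧ g c ≠ 0 := by simpa [u] using hmem
    have := congrArg (ψ c) hg
    rw [map_sum, map_zero, Finset.sum_eq_single c] at this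
    · rw [map_zsmul, smul_eq_zero] at this
      exact this.elim hm.2 (h1 c)
    · intro b hb hbc
      by_cases hgb : g b = 0
      · simp [hgb]
      · have : c ≤ b := u.min'_le b (by simp [u, hb, hgb])
        rw [map_zsmul, h0 c b (lt_of_le_of_ne this (Ne.symm hbc)), smul_zero]
    · intro h; exact absurd hm.1 h
  let e' : M ≃ₗ[ℤ] (Fin r → ℤ) := e.toIntLinearEquiv
  have hli' : LinearIndependent ℤ (e' ∘ x) := hli.map' e'.toLinearMap e'.ker
  have hfin : Finite (FiniteArchimedeanClass M) :=
    Cardinal.lt_aleph0_iff_finite.mp hli'.lt_aleph0_of_finite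
  have := Fintype.ofFinite (FiniteArchimedeanClass M)
  have hcard := hli'.fintype_card_le_finrank
  rw [Module.finrank_fin_fun] at hcard
  let o : Fin (Fintype.card (FiniteArchimedeanClass M)) ≃o FiniteArchimedeanClass M :=
    monoEquivOfFin _ rfl
  refine ⟨_, hcard, fun i => ψ (o i), ?_⟩
  intro a b
  have hmono : StrictMono f := f.monotone'.strictMono_of_injective hinj
  rw [← hmono.le_iff_le, le_iff_eq_or_lt, lexLE, HahnSeries.lt_iff]
  refine or_congr ?_ ?_
  · constructor
    · intro h; funext i; simp [ψ, h]
    · intro h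
      apply ofLex.injective
      ext c
      simpa [ψ] using congrFun h (o.symm c)
  · constructor
    · rintro ⟨i, h, hi⟩
      refine ⟨o.symm i, fun j hj => h _ (by simpa using o.strictMono hj), by simpa [ψ] using hi⟩
    · rintro ⟨i, h, hi⟩
      refine ⟨o i, fun j hj => ?_, hi⟩
      have := h (o.symm j) (by rw [← o.lt_iff_lt]; simpa using hj)
      simpa [ψ] using this

/-- A copy of `ℤ^r` without order. -/
def ZCopy (r : ℕ) : Type := Fin r → ℤ

instance (r : ℕ) : AddCommGroup (ZCopy r) := inferInstanceAs (AddCommGroup (Fin r → ℤ))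

theorem aux_sum {r : ℕ} (φ : (Fin r → ℤ) →+ ℝ) (m : Fin r → ℤ) :
    ∑ j, (m j : ℝ) * φ (Pi.single j 1) = φ m := by
  conv_rhs => rw [pi_eq_sum_univ' m, map_sum]
  refine Finset.sum_congr rfl fun j _ => ?_
  rw [map_zsmul, zsmul_eq_mul]

theorem aux_clear {r : ℕ} (c : Fin r → ℚ) (hc : c ≠ 0) :
    ∃ N : ℚ, N ≠ 0 ∧ ∃ m : Fin r → ℤ, m ≠ 0 ∧ ∀ j, (m j : ℚ) = N * c j := by
  obtain ⟨b, hb⟩ := IsLocalization.exist_integer_multiples_of_finite (nonZeroDivisors ℤ) c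
  choose m hm using hb
  have hb0 : ((b : ℤ) : ℚ) ≠ 0 := by exact_mod_cast nonZeroDivisors.ne_zero b.2
  have hm' : ∀ j, (m j : ℚ) = (b : ℤ) * c j := by
    intro j
    have := hm j
    simpa using this
  refine ⟨(b : ℤ), hb0, m, ?_, hm'⟩
  rintro rfl
  apply hc
  funext j
  have := hm' j
  simpa [hb0] using this

/-- Every additive total order on `ℤ^r` is given by lexicographic comparison of the values
of `s` linear forms (`1 ≤ s ≤ r`) whose span is not contained in any rational hyperplane;
conversely any such family of linear forms defines an additive total order on `ℤ^r`. -/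
theorem stmt7 (r : ℕ) (hr : 1 ≤ r) :
    (∀ R : (Fin r → ℤ) → (Fin r → ℤ) → Prop,
      Reflexive R → Transitive R → (∀ m n, R m n ∨ R n m) →
      (∀ m n o, R m n → R (m + o) (n + o)) →
      (∀ m n, R m n → R n m → m = n) →
      ∃ s : ℕ, 1 ≤ s ∧ s ≤ r ∧ ∃ v : Fin s → (Fin r → ℝ),
        (∀ c : Fin r → ℚ, c ≠ 0 → ∃ i, ∑ j, (c j : ℝ) * v i j ≠ 0) ∧
        (∀ m n, R m n ↔
          lexLE (fun i => ∑ j, (m j : ℝ) * v i j) (fun i => ∑ j, (n j : ℝ) * v i j))) ∧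
    (∀ s : ℕ, ∀ v : Fin s → (Fin r → ℝ),
      (∀ c : Fin r → ℚ, c ≠ 0 → ∃ i, ∑ j, (c j : ℝ) * v i j ≠ 0) →
      ∀ R : (Fin r → ℤ) → (Fin r → ℤ) → Prop,
        (∀ m n, R m n ↔
          lexLE (fun i => ∑ j, (m j : ℝ) * v i j) (fun i => ∑ j, (n j : ℝ) * v i j)) →
        Reflexive R ∧ Transitive R ∧ (∀ m n, R m n ∨ R n m) ∧
        (∀ m n o, R m n → R (m + o) (n + o)) ∧ (∀ m n, R m n → R n m → m = n)) := by
  constructor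
  · intro R hrefl htrans htot hadd hanti
    classical
    letI : LinearOrder (ZCopy r) :=
      { le := R
        le_refl := hrefl
        le_trans := fun a b c h1 h2 => htrans h1 h2
        le_antisymm := hanti
        le_total := htot
        toDecidableLE := Classical.decRel _ }
    haveI : IsOrderedAddMonoid (ZCopy r) :=
      { add_le_add_left := fun a b h c => hadd a b c h }
    obtain ⟨s, hs, φ, hφ⟩ := aux_main (M := ZCopy r) r (AddEquiv.refl (Fin r → ℤ))
    let φ' : Fin s → (Fin r → ℤ) →+ ℝ := φ
    have hφ' : ∀ m n, R m n ↔ lexLE (fun i => φ' i m) (fun i => φ' i n) := hφ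
    have hzero : ∀ m : Fin r → ℤ, (∀ i, φ' i m = 0) → m = 0 := by
      intro m hm
      apply hanti
      · rw [hφ']; left; funext i; simp [hm]
      · rw [hφ']; left; funext i; simp [hm]
    refine ⟨s, ?_, hs, fun i j => φ' i (Pi.single j 1), ?_, ?_⟩
    · by_contra hcon
      have hs0 : s = 0 := by omega
      subst hs0
      have := congrFun (hzero (fun _ => 1) (fun i => i.elim0)) ⟨0, hr⟩
      simp at this
    · intro c hc
      obtain ⟨N, hN, m, hm, hmc⟩ := aux_clear c hc
      by_contra! hcon
      apply hm
      apply hzero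
      intro i
      rw [← aux_sum]
      have : ∀ j, (m j : ℝ) = N * c j := fun j => by exact_mod_cast congrArg (Rat.cast (K := ℝ)) (hmc j)
      simp only [this, mul_assoc, ← Finset.mul_sum]
      rw [hcon i, mul_zero]
    · intro m n
      simp only [aux_sum]
      exact hφ' m n
  · intro s v hv R hR
    simp only [lexLE_iff_toLex] at hR
    refine ⟨fun m => (hR m m).2 le_rfl, fun a b c h1 h2 => (hR _ _).2 (((hR _ _).1 h1).trans ((hR _ _).1 h2)),
      fun m n => ?_, fun m n o h => ?_, fun m n h1 h2 => ?_⟩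
    · rw [hR, hR]; exact le_total _ _
    · rw [hR, ← lexLE_iff_toLex] at h ⊢
      simp only [Pi.add_apply, Int.cast_add, add_mul, Finset.sum_add_distrib]
      rcases h with h | ⟨i, h, hi⟩
      · left; funext i; simpa using congrFun h i
      · right; exact ⟨i, fun j hj => by simpa using h j hj, by simpa using hi⟩
    · have h := toLex.injective (le_antisymm ((hR _ _).1 h1) ((hR _ _).1 h2))
      by_contra hne
      obtain ⟨i, hi⟩ := hv (fun j => ((m j - n j : ℤ) : ℚ)) (by
        intro h0
        apply hne
        funext j
        have := congrFun h0 j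
        have h3 : m j - n j = 0 := by rw [Pi.zero_apply] at this; exact_mod_cast this
        omega)
      apply hi
      have := congrFun h i
      push_cast
      simp only [sub_mul, Finset.sum_sub_distrib, this, sub_self]
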